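/- Soundness of amgu for Clique-Sharing, general case: let x be a variable, T a finite set of variables, cl a clique set and sh a sharing set, and let U = ⋃(cl_{{x}} ∪ cl_T ∪ sh_{{x}} ∪ sh_T) be the union of all cliques and sharing groups relevant to x or T. Then amgu(x, T, ↓cl ∪ sh) ⊆ ↓(rel̄({x} ∪ T, cl) ∪ {U}) ∪ (sh \ sh_{{x}∪T}). -/

import Mathlib

variable {V : Type*} [DecidableEq V]

/-- `℘⁰(C)`: the set of nonempty subsets of a finite set `C`. -/
def pow0 (C : Finset V) : Set (Finset V) := {u | u ⊆ C ∧ u ≠ ∅}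

/-- Concretization of a clique set: `↓cl = ⋃_{C ∈ cl} ℘⁰(C)`. -/
def conc (cl : Set (Finset V)) : Set (Finset V) := ⋃ C ∈ cl, pow0 C

/-- Binary union: `s₁ ⊎ s₂ = {a ∪ b : a ∈ s₁, b ∈ s₂}`. -/
def bin (s₁ s₂ : Set (Finset V)) : Set (Finset V) :=
  {u | ∃ a ∈ s₁, ∃ b ∈ s₂, u = a ∪ b}

/-- Star union: all unions `⋃ T` over finite nonempty subfamilies `T ⊆ s`. -/
def starU (s : Set (Finset V)) : Set (Finset V) :=
  {u | ∃ T : Finset (Finset V), T.Nonempty ∧ ↑T ⊆ s ∧ u = T.sup id}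

/-- `s_G`: the part of `s` relevant to `G` (groups intersecting `G`). -/
def relG (G : Finset V) (s : Set (Finset V)) : Set (Finset V) :=
  {u ∈ s | u ∩ G ≠ ∅}

/-- `rel̄(S, cl) = {C \ S : C ∈ cl} \ {∅}`. -/
def relbar (S : Finset V) (cl : Set (Finset V)) : Set (Finset V) :=
  {d | (∃ C ∈ cl, d = C \ S) ∧ d ≠ ∅}

/-- `project(G, s) = {u ∩ G : u ∈ s} \ {∅}`. -/
def sproject (G : Finset V) (s : Set (Finset V)) : Set (Finset V) :=
  {d | (∃ u ∈ s, d = u ∩ G) ∧ d ≠ ∅}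

/-- Abstract unification of the Sharing domain for `x = t`, `T` the variables of `t`. -/
def amgu (x : V) (T : Finset V) (s : Set (Finset V)) : Set (Finset V) :=
  (s \ relG ({x} ∪ T) s) ∪ bin (starU (relG {x} s)) (starU (relG T s))

/-- The `extend` function of the Sharing domain. -/
def extendSh (Call : Set (Finset V)) (G : Finset V) (Prime : Set (Finset V)) :
    Set (Finset V) :=
  {u ∈ Call | u ∩ G = ∅} ∪ {u ∈ starU (relG G Call) | u ∩ G ∈ Prime}

/-- Union of all groups of `s` containing `x`, as a set of variables. -/
def occSet (s : Set (Finset V)) (x : V) : Set V :=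
  ⋃ u ∈ {u ∈ s | x ∈ u}, (↑u : Set V)

/-!
Removing the groups that meet `S` from `↓cl` gives exactly `↓(rel̄(S, cl))`, and on `sh` the removal
is exact as well, so only the groups created by the unification are approximated. These are unions
of groups meeting `x` or `T`. Each such group is nonempty and lies in `U`, because a group of `↓cl`
meeting `G` comes from a clique meeting `G`, and `℘⁰(U)` is closed under finite nonempty unions.
-/

section Concretization

variable {α : Type*}

theorem mem_conc {cl : Set (Finset α)} {u : Finset α} :
    u ∈ conc cl ↔ ∃ C ∈ cl, u ⊆ C ∧ u ≠ ∅ := by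
  simp only [conc, pow0, Set.mem_iUnion, Set.mem_ofPred_eq, exists_prop]

theorem conc_union (cl₁ cl₂ : Set (Finset α)) : conc (cl₁ ∪ cl₂) = conc cl₁ ∪ conc cl₂ :=
  Set.biUnion_union cl₁ cl₂ pow0

theorem conc_singleton (C : Finset α) : conc {C} = pow0 C :=
  Set.biUnion_singleton C pow0

end Concretization

section Unions

variable {s s₁ s₂ : Set (Finset V)} {U : Finset V}

theorem starU_subset_pow0 (hs : s ⊆ pow0 U) : starU s ⊆ pow0 U := by
  rintro _ ⟨F, ⟨w, hw⟩, hF, rfl⟩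
  have w_subset : w ⊆ F.sup id := Finset.le_sup (f := id) hw
  have w_nonempty : w.Nonempty := Finset.nonempty_iff_ne_empty.2 (hs (hF hw)).2
  exact ⟨Finset.sup_le fun u hu => (hs (hF hu)).1, (w_nonempty.mono w_subset).ne_empty⟩

theorem bin_subset_pow0 (hs₁ : s₁ ⊆ pow0 U) (hs₂ : s₂ ⊆ pow0 U) : bin s₁ s₂ ⊆ pow0 U := by
  rintro _ ⟨a, ha, b, hb, rfl⟩
  have a_nonempty : a.Nonempty := Finset.nonempty_iff_ne_empty.2 (hs₁ ha).2
  exact ⟨Finset.union_subset (hs₁ ha).1 (hs₂ hb).1,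
    (a_nonempty.mono Finset.subset_union_left).ne_empty⟩

end Unions

section Relevance

variable {G U : Finset V}

theorem relG_union (G : Finset V) (s t : Set (Finset V)) :
    relG G (s ∪ t) = relG G s ∪ relG G t :=
  Set.sep_union

theorem mem_sdiff_relG {s : Set (Finset V)} {u : Finset V} :
    u ∈ s \ relG G s ↔ u ∈ s ∧ Disjoint u G := by
  simp only [relG, Set.mem_sdiff, Set.mem_ofPred_eq, Finset.disjoint_iff_inter_eq_empty]
  tauto

theorem union_sdiff_relG (G : Finset V) (s t : Set (Finset V)) :
    (s ∪ t) \ relG G (s ∪ t) = (s \ relG G s) ∪ (t \ relG G t) := by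
  ext u
  simp only [Set.mem_union, mem_sdiff_relG, or_and_right]

theorem conc_sdiff_relG (S : Finset V) (cl : Set (Finset V)) :
    conc cl \ relG S (conc cl) = conc (relbar S cl) := by
  ext u
  simp only [mem_sdiff_relG, mem_conc]
  constructor
  · rintro ⟨⟨C, hC, huC, hu⟩, hdisj⟩
    have u_subset : u ⊆ C \ S := Finset.subset_sdiff.2 ⟨huC, hdisj⟩
    have sdiff_ne_empty : C \ S ≠ ∅ :=
      ((Finset.nonempty_iff_ne_empty.2 hu).mono u_subset).ne_empty
    exact ⟨C \ S, ⟨⟨C, hC, rfl⟩, sdiff_ne_empty⟩, u_subset, hu⟩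
  · rintro ⟨_, ⟨⟨C, hC, rfl⟩, -⟩, huCS, hu⟩
    obtain ⟨huC, hdisj⟩ := Finset.subset_sdiff.1 huCS
    exact ⟨⟨C, hC, huC, hu⟩, hdisj⟩

theorem relG_subset_pow0 {s : Set (Finset V)} (hs : ∀ u ∈ relG G s, u ⊆ U) :
    relG G s ⊆ pow0 U := by
  intro u hu
  refine ⟨hs u hu, ?_⟩
  rintro rfl
  exact hu.2 (Finset.empty_inter G)

theorem relG_conc_subset_conc_relG (G : Finset V) (cl : Set (Finset V)) :
    relG G (conc cl) ⊆ conc (relG G cl) := by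
  rintro u ⟨hu, huG⟩
  obtain ⟨C, hC, huC, hne⟩ := mem_conc.1 hu
  have inter_nonempty : (u ∩ G).Nonempty := Finset.nonempty_iff_ne_empty.2 huG
  have hCG : C ∩ G ≠ ∅ := (inter_nonempty.mono (Finset.inter_subset_inter_right huC)).ne_empty
  exact mem_conc.2 ⟨C, ⟨hC, hCG⟩, huC, hne⟩

theorem relG_conc_union_subset_pow0 {cl sh : Set (Finset V)}
    (hcl : ∀ C ∈ relG G cl, C ⊆ U) (hsh : ∀ u ∈ relG G sh, u ⊆ U) :
    relG G (conc cl ∪ sh) ⊆ pow0 U := by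
  rw [relG_union]
  refine Set.union_subset (fun u hu => ?_) (relG_subset_pow0 hsh)
  obtain ⟨C, hC, huC, hne⟩ := mem_conc.1 (relG_conc_subset_conc_relG G cl hu)
  exact ⟨huC.trans (hcl C hC), hne⟩

end Relevance

/-- amgu soundness, general case. -/
theorem amgu_clique_general (x : V) (T : Finset V) (cl sh : Set (Finset V))
    (U : Finset V)
    (hU : (↑U : Set V) =
      ⋃ u ∈ (relG {x} cl ∪ relG T cl ∪ relG {x} sh ∪ relG T sh), (↑u : Set V)) :
    amgu x T (conc cl ∪ sh) ⊆
      conc (relbar ({x} ∪ T) cl ∪ {U}) ∪ (sh \ relG ({x} ∪ T) sh) := by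
  have relevant_subset :
      ∀ u ∈ relG {x} cl ∪ relG T cl ∪ relG {x} sh ∪ relG T sh, u ⊆ U := fun u hu =>
    Finset.coe_subset.1 (hU ▸ Set.subset_biUnion_of_mem (u := fun v : Finset V => (v : Set V)) hu)
  simp only [Set.mem_union, or_imp, forall_and] at relevant_subset
  obtain ⟨⟨⟨hxcl, hTcl⟩, hxsh⟩, hTsh⟩ := relevant_subset
  have new_groups_subset :
      bin (starU (relG {x} (conc cl ∪ sh))) (starU (relG T (conc cl ∪ sh))) ⊆ pow0 U :=
    bin_subset_pow0 (starU_subset_pow0 (relG_conc_union_subset_pow0 hxcl hxsh))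
      (starU_subset_pow0 (relG_conc_union_subset_pow0 hTcl hTsh))
  rw [amgu, union_sdiff_relG, conc_sdiff_relG, conc_union, conc_singleton, Set.union_right_comm]
  gcongr
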